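/- arXiv:1708.09339 — 5 statements merged into one kernel-verified Lean document; each statement's English description precedes it below -/
import Mathlib

section
/- For contact angle γ = π/2, the dimensionless total force curve is centrally symmetric about the point (π/2, F(π/2)): for every φ ∈ ℝ, F(φ) + F(π − φ) = 2·F(π/2) = −2·A·C² + π·C². -/
/-!
Reflecting both angles, `φ ↦ π - φ` and `γ ↦ π - γ`, turns `φ + γ` into `2π - (φ + γ)`, and every
trigonometric term of the total force changes sign. Only the affine part `-A C² + C² φ` survives
in the sum of the two forces. The contact angle `π / 2` is the fixed point of `γ ↦ π - γ`, so there
the reflection maps a single force curve to itself.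
-/

section TotalForce

open Real

/-- The dimensionless total force at angle `φ` for contact angle `γ`, where the real numbers `A`
and `C` are the dimensionless parameters of the model. -/
noncomputable def totalForce (γ A C φ : ℝ) : ℝ :=
  -A * C ^ 2 - 2 * sin (φ + γ) - 4 * C * cos ((φ + γ) / 2) * sin φ
    - (1 / 2) * C ^ 2 * sin (2 * φ) + C ^ 2 * φ

theorem sin_pi_sub_add_pi_sub (x y : ℝ) : sin (π - x + (π - y)) = -sin (x + y) := by
  rw [← sin_two_pi_sub]
  ring_nf

theorem cos_half_pi_sub_add_pi_sub (x y : ℝ) :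
    cos ((π - x + (π - y)) / 2) = -cos ((x + y) / 2) := by
  rw [← cos_pi_sub]
  ring_nf

theorem total_force_central_symmetry_general (γ A C φ : ℝ) :
    totalForce γ A C φ + totalForce (π - γ) A C (π - φ) = -2 * A * C ^ 2 + π * C ^ 2 := by
  have sin_double : sin (2 * (π - φ)) = -sin (2 * φ) := by
    simpa only [two_mul] using sin_pi_sub_add_pi_sub φ φ
  simp only [totalForce, sin_pi_sub_add_pi_sub, cos_half_pi_sub_add_pi_sub, sin_pi_sub, sin_double]
  ring

theorem totalForce_pi_div_two_add_pi_sub (A C φ : ℝ) :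
    totalForce (π / 2) A C φ + totalForce (π / 2) A C (π - φ) = -2 * A * C ^ 2 + π * C ^ 2 := by
  simpa only [sub_half] using total_force_central_symmetry_general (π / 2) A C φ

theorem two_mul_totalForce_pi_div_two (A C : ℝ) :
    2 * totalForce (π / 2) A C (π / 2) = -2 * A * C ^ 2 + π * C ^ 2 := by
  simpa only [sub_half, ← two_mul] using totalForce_pi_div_two_add_pi_sub A C (π / 2)

end TotalForce

/-- For contact angle `γ = π/2`, the dimensionless total force curve is centrally symmetric
about `(π/2, F(π/2))`: `F(φ) + F(π − φ) = 2·F(π/2) = −2·A·C² + π·C²` for every `φ`. -/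
theorem total_force_central_symmetry (A C : ℝ) (hA : 0 < A) (hC : 0 < C)
    (F : ℝ → ℝ)
    (hF : F = fun φ => -A * C ^ 2 - 2 * Real.sin (φ + Real.pi / 2)
      - 4 * C * Real.cos ((φ + Real.pi / 2) / 2) * Real.sin φ
      - (1 / 2) * C ^ 2 * Real.sin (2 * φ) + C ^ 2 * φ) :
    ∀ φ : ℝ, F φ + F (Real.pi - φ) = 2 * F (Real.pi / 2) ∧
      2 * F (Real.pi / 2) = -2 * A * C ^ 2 + Real.pi * C ^ 2 := by
  obtain rfl : F = totalForce (Real.pi / 2) A C := hF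
  have center := two_mul_totalForce_pi_div_two A C
  exact fun φ => ⟨(totalForce_pi_div_two_add_pi_sub A C φ).trans center.symm, center⟩
end

section
/- Let γ ∈ (π/2, π) and C > 0 satisfy 2·C·cos(γ/2) + cos γ > 0. Then for every φ ∈ (0, π/4], the second derivative of the dimensionless total force is strictly positive: F″(φ) = (C/2)·(cos(γ/2)·sin(φ/2) − sin(γ/2)·cos(φ/2) + 9·cos(γ/2)·sin(3φ/2) + 9·sin(γ/2)·cos(3φ/2)) + 2·C²·sin(2φ) + 2·cos γ·sin φ + 2·sin γ·cos φ > 0. -/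
/-!
The product-to-sum formula turns `F` into an affine function plus a combination of sines of affine
functions of `φ`, so `F″` is found by multiplying each sine by minus the square of its frequency.
The triple-angle formulas with `x = φ / 2` then give
`F″(φ) = 2 sin (φ + γ) + C sin (γ / 2) cos (φ / 2) (9 cos φ - 5)
  + C cos (γ / 2) sin (φ / 2) (9 cos φ + 5) + 2 C² sin (2 φ)`.
The only term that can be negative while `5 / 9 ≤ cos φ` is the part `2 cos γ sin φ` of the first
one. Adding `4 C cos (γ / 2) sin φ` makes it positive, and because
`sin φ = 2 sin (φ / 2) cos (φ / 2)` this amount can be borrowed from the third term, where it lowers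
the factor `9 cos φ + 5 ≥ 10` by `8 cos (φ / 2) ≤ 8`.
-/

open Real

theorem cos_three_mul_eq_cos_mul (x : ℝ) : cos (3 * x) = cos x * (2 * cos (2 * x) - 1) := by
  rw [cos_three_mul, cos_two_mul]
  ring

theorem sin_three_mul_eq_sin_mul (x : ℝ) : sin (3 * x) = sin x * (2 * cos (2 * x) + 1) := by
  rw [sin_three_mul, cos_two_mul']
  linear_combination -2 * sin x * sin_sq_add_cos_sq x

theorem hasDerivAt_sin_mul_add (a b x : ℝ) :
    HasDerivAt (fun y => sin (a * y + b)) (a * cos (a * x + b)) x :=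
  (((hasDerivAt_const_mul a).add_const b).sin).congr_deriv (mul_comm _ _)

theorem hasDerivAt_cos_mul_add (a b x : ℝ) :
    HasDerivAt (fun y => cos (a * y + b)) (-(a * sin (a * x + b))) x :=
  (((hasDerivAt_const_mul a).add_const b).cos).congr_deriv (by ring)

/-- The closed form of `F″`, arranged as in the paper. It does not involve `A`, which enters `F`
only through an additive constant. -/
noncomputable def totalForceSecondDeriv (γ C φ : ℝ) : ℝ :=
  (C / 2) * (cos (γ / 2) * sin (φ / 2) - sin (γ / 2) * cos (φ / 2)
      + 9 * cos (γ / 2) * sin (3 * φ / 2) + 9 * sin (γ / 2) * cos (3 * φ / 2))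
    + 2 * C ^ 2 * sin (2 * φ) + 2 * cos γ * sin φ + 2 * sin γ * cos φ

theorem totalForce_eq_affine_sub_sin (γ A C φ : ℝ) :
    totalForce γ A C φ = C ^ 2 * φ + -A * C ^ 2 - 2 * sin (1 * φ + γ)
      - 2 * C * sin (3 / 2 * φ + γ / 2) - 2 * C * sin (1 / 2 * φ + -(γ / 2))
      - 1 / 2 * C ^ 2 * sin (2 * φ + 0) := by
  have product_to_sum := two_mul_sin_mul_cos φ ((φ + γ) / 2)
  rw [show φ - (φ + γ) / 2 = 1 / 2 * φ + -(γ / 2) by ring,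
    show φ + (φ + γ) / 2 = 3 / 2 * φ + γ / 2 by ring] at product_to_sum
  rw [totalForce, one_mul, add_zero]
  linear_combination -2 * C * product_to_sum

theorem deriv_totalForce (γ A C : ℝ) :
    deriv (totalForce γ A C) = fun φ => C ^ 2 - 2 * cos (1 * φ + γ)
      - 3 * C * cos (3 / 2 * φ + γ / 2) - C * cos (1 / 2 * φ + -(γ / 2))
      - C ^ 2 * cos (2 * φ + 0) := by
  funext φ
  rw [funext (totalForce_eq_affine_sub_sin γ A C)]
  refine HasDerivAt.deriv ?_
  refine ((((((hasDerivAt_const_mul (C ^ 2)).add_const (-A * C ^ 2)).sub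
    ((hasDerivAt_sin_mul_add 1 γ φ).const_mul 2)).sub
    ((hasDerivAt_sin_mul_add (3 / 2) (γ / 2) φ).const_mul (2 * C))).sub
    ((hasDerivAt_sin_mul_add (1 / 2) (-(γ / 2)) φ).const_mul (2 * C))).sub
    ((hasDerivAt_sin_mul_add 2 0 φ).const_mul (1 / 2 * C ^ 2))).congr_deriv ?_
  ring

theorem hasDerivAt_deriv_totalForce (γ A C φ : ℝ) :
    HasDerivAt (deriv (totalForce γ A C)) (totalForceSecondDeriv γ C φ) φ := by
  rw [deriv_totalForce]
  refine ((((((hasDerivAt_cos_mul_add 1 γ φ).const_mul 2).const_sub (C ^ 2)).sub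
    ((hasDerivAt_cos_mul_add (3 / 2) (γ / 2) φ).const_mul (3 * C))).sub
    ((hasDerivAt_cos_mul_add (1 / 2) (-(γ / 2)) φ).const_mul C)).sub
    ((hasDerivAt_cos_mul_add 2 0 φ).const_mul (C ^ 2))).congr_deriv ?_
  rw [totalForceSecondDeriv, show 3 * φ / 2 = 3 / 2 * φ by ring,
    show φ / 2 = 1 / 2 * φ by ring, sin_add, sin_add, sin_add, sin_neg, cos_neg, one_mul φ,
    add_zero]
  ring

theorem totalForceSecondDeriv_eq_add (γ C φ : ℝ) :
    totalForceSecondDeriv γ C φ =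
      2 * ((2 * C * cos (γ / 2) + cos γ) * sin φ) + 2 * (sin γ * cos φ)
      + C * (sin (γ / 2) * cos (φ / 2) * (9 * cos φ - 5))
      + C * (cos (γ / 2) * sin (φ / 2) * (9 * cos φ + 5 - 8 * cos (φ / 2)))
      + 2 * (C ^ 2 * sin (2 * φ)) := by
  have sin_eq : sin φ = 2 * sin (φ / 2) * cos (φ / 2) := by
    rw [← sin_two_mul, mul_div_cancel₀ φ two_ne_zero]
  rw [totalForceSecondDeriv, mul_div_assoc, cos_three_mul_eq_cos_mul, sin_three_mul_eq_sin_mul,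
    mul_div_cancel₀ φ two_ne_zero]
  linear_combination -4 * C * cos (γ / 2) * sin_eq

theorem totalForceSecondDeriv_pos {γ C φ : ℝ} (hγ : γ ∈ Set.Icc 0 π) (hC : 0 ≤ C)
    (hcond : 0 < 2 * C * cos (γ / 2) + cos γ) (hφ : φ ∈ Set.Ioc 0 (arccos (5 / 9))) :
    0 < totalForceSecondDeriv γ C φ := by
  obtain ⟨γ_nonneg, γ_le⟩ := hγ
  obtain ⟨φ_pos, φ_le⟩ := hφ
  have φ_le_pi_div_two : φ ≤ π / 2 := φ_le.trans (arccos_le_pi_div_two.2 (by norm_num))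
  have cos_φ_ge : 5 / 9 ≤ cos φ := by
    rw [← cos_arccos (x := 5 / 9) (by norm_num) (by norm_num)]
    exact cos_le_cos_of_nonneg_of_le_pi φ_pos.le (arccos_le_pi _) φ_le
  have sin_φ_pos : 0 < sin φ := sin_pos_of_pos_of_lt_pi φ_pos (by linarith)
  have sin_γ_nonneg : 0 ≤ sin γ := sin_nonneg_of_nonneg_of_le_pi γ_nonneg γ_le
  have sin_half_γ_nonneg : 0 ≤ sin (γ / 2) :=
    sin_nonneg_of_nonneg_of_le_pi (by linarith) (by linarith)
  have cos_half_γ_nonneg : 0 ≤ cos (γ / 2) :=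
    cos_nonneg_of_neg_pi_div_two_le_of_le (by linarith) (by linarith)
  have sin_half_φ_nonneg : 0 ≤ sin (φ / 2) :=
    sin_nonneg_of_nonneg_of_le_pi (by linarith) (by linarith)
  have cos_half_φ_nonneg : 0 ≤ cos (φ / 2) :=
    cos_nonneg_of_neg_pi_div_two_le_of_le (by linarith) (by linarith)
  have sin_two_φ_nonneg : 0 ≤ sin (2 * φ) :=
    sin_nonneg_of_nonneg_of_le_pi (by linarith) (by linarith)
  have sin_half_γ_factor_nonneg : 0 ≤ 9 * cos φ - 5 := by linarith
  have cos_half_γ_factor_nonneg : 0 ≤ 9 * cos φ + 5 - 8 * cos (φ / 2) := by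
    linarith [cos_le_one (φ / 2)]
  rw [totalForceSecondDeriv_eq_add]
  positivity

theorem pi_div_four_le_arccos_five_ninths : π / 4 ≤ arccos (5 / 9) := by
  have five_ninths_le_cos : 5 / 9 ≤ cos (π / 4) := by
    rw [cos_pi_div_four]
    linarith [show (10 / 9 : ℝ) ≤ √2 from le_sqrt_of_sq_le (by norm_num)]
  calc π / 4 = arccos (cos (π / 4)) := (arccos_cos (by positivity) (by linarith [pi_pos])).symm
    _ ≤ arccos (5 / 9) := arccos_le_arccos five_ninths_le_cos

theorem total_force_second_deriv_pos_obtuse_general {γ C φ : ℝ} (A : ℝ) (hγ : γ ∈ Set.Icc 0 π)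
    (hC : 0 ≤ C) (hcond : 0 < 2 * C * cos (γ / 2) + cos γ)
    (hφ : φ ∈ Set.Ioc 0 (arccos (5 / 9))) :
    deriv (deriv (totalForce γ A C)) φ = totalForceSecondDeriv γ C φ ∧
      0 < totalForceSecondDeriv γ C φ :=
  ⟨(hasDerivAt_deriv_totalForce γ A C φ).deriv, totalForceSecondDeriv_pos hγ hC hcond hφ⟩

/-- For `γ ∈ (π/2, π)` and `C > 0` with `2·C·cos(γ/2) + cos γ > 0`, the second derivative of
the dimensionless total force is strictly positive on `(0, π/4]`, with the explicit formula. -/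
theorem total_force_second_deriv_pos_obtuse (γ A C : ℝ)
    (hγ : γ ∈ Set.Ioo (Real.pi / 2) Real.pi) (hA : 0 < A) (hC : 0 < C)
    (hcond : 0 < 2 * C * Real.cos (γ / 2) + Real.cos γ)
    (F : ℝ → ℝ)
    (hF : F = fun φ => -A * C ^ 2 - 2 * Real.sin (φ + γ)
      - 4 * C * Real.cos ((φ + γ) / 2) * Real.sin φ
      - (1 / 2) * C ^ 2 * Real.sin (2 * φ) + C ^ 2 * φ) :
    ∀ φ ∈ Set.Ioc (0 : ℝ) (Real.pi / 4),
      deriv (deriv F) φ =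
        (C / 2) * (Real.cos (γ / 2) * Real.sin (φ / 2) - Real.sin (γ / 2) * Real.cos (φ / 2)
          + 9 * Real.cos (γ / 2) * Real.sin (3 * φ / 2)
          + 9 * Real.sin (γ / 2) * Real.cos (3 * φ / 2))
        + 2 * C ^ 2 * Real.sin (2 * φ)
        + 2 * Real.cos γ * Real.sin φ + 2 * Real.sin γ * Real.cos φ ∧
      0 < (C / 2) * (Real.cos (γ / 2) * Real.sin (φ / 2) - Real.sin (γ / 2) * Real.cos (φ / 2)
          + 9 * Real.cos (γ / 2) * Real.sin (3 * φ / 2)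
          + 9 * Real.sin (γ / 2) * Real.cos (3 * φ / 2))
        + 2 * C ^ 2 * Real.sin (2 * φ)
        + 2 * Real.cos γ * Real.sin φ + 2 * Real.sin γ * Real.cos φ := by
  subst hF
  exact fun φ hφ => total_force_second_deriv_pos_obtuse_general A
    ⟨by linarith [pi_pos, hγ.1], hγ.2.le⟩ hC.le hcond
    ⟨hφ.1, hφ.2.trans pi_div_four_le_arccos_five_ninths⟩
end

section
/- Let σ > 0, ρ > 0, g > 0, a > 0, m > 0 and γ ∈ [0, π]. Define E : ℝ → ℝ by E(φ) = m·g·(a·cos φ + 2·√(σ/(ρg))·cos((φ+γ)/2)) − 2·σ·a·φ·cos γ + (8/3)·σ·√(σ/(ρg))·(1 − sin³((φ+γ)/2)) + 2·σ·a·sin φ·cos(φ+γ) + (1/12)·ρ·g·a³·sin(3φ) − ρ·g·a³·φ·cos φ + (3/4)·ρ·g·a³·sin φ + a²·√(σρg)·cos((φ+γ)/2)·sin(2φ) − 2·a²·√(σρg)·φ·cos((φ+γ)/2), define F : ℝ → ℝ by F(φ) = −m·g − 2·σ·sin(φ+γ) − 4·a·√(σρg)·cos((φ+γ)/2)·sin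 φ − (1/2)·ρ·g·a²·sin(2φ) + ρ·g·a²·φ, and define h : ℝ → ℝ by h(φ) = a·cos φ + 2·√(σ/(ρg))·cos((φ+γ)/2). Then for every φ ∈ ℝ, E′(φ) = −F(φ)·h′(φ); that is, the negative derivative of the total energy with respect to the height of the center equals the total force. -/
/-!
The energy is the potential energy `m g h`, minus `ρ g` times the first moment of the region
displaced by the cylinder, plus the energy of the wetted arc and of the free surface it removes,
plus the energy of the two menisci. The `φ`-derivative of the second part is minus the buoyancy
times `h'`, plus `ρ g a cos φ z²`, where `z` is the height of the contact line. For the capillary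
length `ℓ`, where `ρ g ℓ² = σ`, this height satisfies `ρ g z² = 2 σ (1 + cos (φ + γ))`, which turns
the remainder, together with the derivatives of the two surface energies, into
`2 σ sin (φ + γ) h'`, minus the vertical force of surface tension times `h'`.
-/

namespace FloatingCylinder

open Real

/-- Height of the contact line above the undisturbed level, when the capillary length is `ℓ`. -/
noncomputable def contactHeight (ℓ γ φ : ℝ) : ℝ :=
  2 * ℓ * cos ((φ + γ) / 2)

/-- Height of the axis of the cylinder above the undisturbed level; the wetting angle `φ` is the
half-angle of the wetted arc, measured from the lowest point. -/
noncomputable def centerHeight (a ℓ γ φ : ℝ) : ℝ :=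
  a * cos φ + contactHeight ℓ γ φ

/-- Area of the circular segment of half-angle `φ` cut off the disk of radius `a` by the chord
joining the contact points. -/
noncomputable def segmentArea (a φ : ℝ) : ℝ :=
  a ^ 2 * (φ - sin φ * cos φ)

/-- Signed area between the wetted arc and the undisturbed level, for contact points at height `z`:
the segment less the strip of height `z` between the undisturbed level and the chord. The buoyancy
is the weight of this area of fluid. -/
noncomputable def displacedArea (a z φ : ℝ) : ℝ :=
  segmentArea a φ - 2 * (a * sin φ) * z

/-- First moment, about the undisturbed level, of the region whose area is `displacedArea a z φ`.
The moment of the segment about the horizontal line through the axis is `-2 / 3 * (a * sin φ) ^ 3`,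
and that of the strip about the undisturbed level is `a * sin φ * z ^ 2`. -/
noncomputable def displacedMoment (a z φ : ℝ) : ℝ :=
  segmentArea a φ * (a * cos φ + z) - 2 / 3 * (a * sin φ) ^ 3 - a * sin φ * z ^ 2

/-- Energy of the wetted arc, by Young's law for the contact angle `γ`, and of the free surface
replaced by the chord between the contact points. -/
noncomputable def wettingEnergy (σ a γ φ : ℝ) : ℝ :=
  -2 * σ * a * (φ * cos γ + sin φ)

/-- Capillary and gravitational energy of the two menisci outside the contact points. -/
noncomputable def meniscusEnergy (σ ℓ γ φ : ℝ) : ℝ :=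
  8 / 3 * σ * ℓ * (1 - sin ((φ + γ) / 2) ^ 3)

/-- Total energy relative to the undisturbed state, with the capillary length `ℓ` as a separate
parameter. -/
noncomputable def totalEnergy (σ ρ g a m ℓ γ φ : ℝ) : ℝ :=
  m * g * centerHeight a ℓ γ φ - ρ * g * displacedMoment a (contactHeight ℓ γ φ) φ
    + wettingEnergy σ a γ φ + meniscusEnergy σ ℓ γ φ

/-- Total vertical force: weight, surface tension and buoyancy, with the capillary length `ℓ` as a
separate parameter. -/
noncomputable def totalForce (σ ρ g a m ℓ γ φ : ℝ) : ℝ :=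
  -m * g - 2 * σ * sin (φ + γ) + ρ * g * displacedArea a (contactHeight ℓ γ φ) φ

lemma hasDerivAt_half_add (γ φ : ℝ) : HasDerivAt (fun φ ↦ (φ + γ) / 2) (1 / 2) φ :=
  ((hasDerivAt_id' φ).add_const γ).div_const 2

lemma sin_add_eq_two_mul_half (φ γ : ℝ) :
    sin (φ + γ) = 2 * sin ((φ + γ) / 2) * cos ((φ + γ) / 2) := by
  rw [← sin_two_mul, mul_div_cancel₀ _ two_ne_zero]

lemma contactHeight_sq (ℓ γ φ : ℝ) :
    contactHeight ℓ γ φ ^ 2 = 2 * ℓ ^ 2 * (1 + cos (φ + γ)) := by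
  rw [contactHeight, mul_pow, cos_sq, mul_div_cancel₀ _ two_ne_zero]
  ring

lemma hasDerivAt_contactHeight (ℓ γ φ : ℝ) :
    HasDerivAt (contactHeight ℓ γ) (-(ℓ * sin ((φ + γ) / 2))) φ :=
  ((hasDerivAt_half_add γ φ).cos.const_mul (2 * ℓ)).congr_deriv (by ring)

lemma hasDerivAt_centerHeight (a ℓ γ φ : ℝ) :
    HasDerivAt (centerHeight a ℓ γ) (-(a * sin φ) - ℓ * sin ((φ + γ) / 2)) φ :=
  (((hasDerivAt_cos φ).const_mul a).add (hasDerivAt_contactHeight ℓ γ φ)).congr_deriv (by ring)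

lemma hasDerivAt_segmentArea (a φ : ℝ) :
    HasDerivAt (segmentArea a) (2 * (a * sin φ) ^ 2) φ := by
  refine (((hasDerivAt_id' φ).sub
    ((hasDerivAt_sin φ).mul (hasDerivAt_cos φ))).const_mul (a ^ 2)).congr_deriv ?_
  linear_combination -a ^ 2 * sin_sq_add_cos_sq φ

lemma hasDerivAt_displacedMoment (a : ℝ) {z : ℝ → ℝ} {z' φ : ℝ} (hz : HasDerivAt z z' φ) :
    HasDerivAt (fun φ ↦ displacedMoment a (z φ) φ)
      (displacedArea a (z φ) φ * (-(a * sin φ) + z') - a * cos φ * z φ ^ 2) φ := by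
  have hcos : HasDerivAt (fun φ ↦ a * cos φ) (a * -sin φ) φ := (hasDerivAt_cos φ).const_mul a
  have hsin : HasDerivAt (fun φ ↦ a * sin φ) (a * cos φ) φ := (hasDerivAt_sin φ).const_mul a
  refine ((((hasDerivAt_segmentArea a φ).mul (hcos.add hz)).sub
    ((hsin.pow 3).const_mul (2 / 3))).sub (hsin.mul (hz.pow 2))).congr_deriv ?_
  simp only [displacedArea, Pi.add_apply, Pi.pow_apply]
  push_cast
  ring

lemma hasDerivAt_wettingEnergy (σ a γ φ : ℝ) :
    HasDerivAt (wettingEnergy σ a γ) (-2 * σ * a * (cos γ + cos φ)) φ :=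
  ((((hasDerivAt_id' φ).mul_const (cos γ)).add (hasDerivAt_sin φ)).const_mul
    (-2 * σ * a)).congr_deriv (by ring)

lemma hasDerivAt_meniscusEnergy (σ ℓ γ φ : ℝ) :
    HasDerivAt (meniscusEnergy σ ℓ γ)
      (2 * σ * sin (φ + γ) * -(ℓ * sin ((φ + γ) / 2))) φ := by
  refine ((((hasDerivAt_half_add γ φ).sin.pow 3).const_sub 1).const_mul
    (8 / 3 * σ * ℓ)).congr_deriv ?_
  rw [sin_add_eq_two_mul_half]
  push_cast
  ring

theorem hasDerivAt_totalEnergy {σ ρ g ℓ : ℝ} (hℓ : ρ * g * ℓ ^ 2 = σ) (a m γ φ : ℝ) :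
    HasDerivAt (totalEnergy σ ρ g a m ℓ γ)
      (-totalForce σ ρ g a m ℓ γ φ * deriv (centerHeight a ℓ γ) φ) φ := by
  have hmeniscus : ρ * g * contactHeight ℓ γ φ ^ 2 = 2 * σ * (1 + cos (φ + γ)) := by
    rw [contactHeight_sq, ← hℓ]
    ring
  have hcos : cos γ = cos (φ + γ) * cos φ + sin (φ + γ) * sin φ := by
    rw [← cos_sub, add_sub_cancel_left]
  have hcenter := hasDerivAt_centerHeight a ℓ γ φ
  refine ((((hcenter.const_mul (m * g)).sub ((hasDerivAt_displacedMoment a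
    (hasDerivAt_contactHeight ℓ γ φ)).const_mul (ρ * g))).add
    (hasDerivAt_wettingEnergy σ a γ φ)).add
    (hasDerivAt_meniscusEnergy σ ℓ γ φ)).congr_deriv ?_
  rw [hcenter.deriv, totalForce]
  linear_combination a * cos φ * hmeniscus - 2 * σ * a * hcos

lemma totalEnergy_eq {σ ρ g ℓ : ℝ} (hℓ : ρ * g * ℓ ^ 2 = σ) (a m γ φ : ℝ) :
    totalEnergy σ ρ g a m ℓ γ φ =
      m * g * (a * cos φ + 2 * ℓ * cos ((φ + γ) / 2))
      - 2 * σ * a * φ * cos γ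
      + (8 / 3) * σ * ℓ * (1 - sin ((φ + γ) / 2) ^ 3)
      + 2 * σ * a * sin φ * cos (φ + γ)
      + (1 / 12) * ρ * g * a ^ 3 * sin (3 * φ)
      - ρ * g * a ^ 3 * φ * cos φ
      + (3 / 4) * ρ * g * a ^ 3 * sin φ
      + a ^ 2 * (ρ * g * ℓ) * cos ((φ + γ) / 2) * sin (2 * φ)
      - 2 * a ^ 2 * (ρ * g * ℓ) * φ * cos ((φ + γ) / 2) := by
  simp only [totalEnergy, displacedMoment, contactHeight_sq]
  simp only [centerHeight, contactHeight, segmentArea, wettingEnergy, meniscusEnergy,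
    sin_three_mul, sin_two_mul]
  linear_combination 2 * a * sin φ * (1 + cos (φ + γ)) * hℓ
    + ρ * g * a ^ 3 * sin φ * sin_sq_add_cos_sq φ

lemma totalForce_eq (σ ρ g a m ℓ γ φ : ℝ) :
    totalForce σ ρ g a m ℓ γ φ =
      -m * g - 2 * σ * sin (φ + γ)
      - 4 * a * (ρ * g * ℓ) * cos ((φ + γ) / 2) * sin φ
      - (1 / 2) * ρ * g * a ^ 2 * sin (2 * φ)
      + ρ * g * a ^ 2 * φ := by
  rw [totalForce, displacedArea, segmentArea, contactHeight, sin_two_mul]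
  ring

end FloatingCylinder

open FloatingCylinder Real in
theorem energy_force_relation_general (σ ρ g a m γ : ℝ) (hσ : 0 ≤ σ) (hρg : 0 < ρ * g)
    (E F h : ℝ → ℝ)
    (hE : E = fun φ =>
      m * g * (a * cos φ + 2 * √(σ / (ρ * g)) * cos ((φ + γ) / 2))
      - 2 * σ * a * φ * cos γ
      + (8 / 3) * σ * √(σ / (ρ * g)) * (1 - sin ((φ + γ) / 2) ^ 3)
      + 2 * σ * a * sin φ * cos (φ + γ)
      + (1 / 12) * ρ * g * a ^ 3 * sin (3 * φ)
      - ρ * g * a ^ 3 * φ * cos φ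
      + (3 / 4) * ρ * g * a ^ 3 * sin φ
      + a ^ 2 * √(σ * ρ * g) * cos ((φ + γ) / 2) * sin (2 * φ)
      - 2 * a ^ 2 * √(σ * ρ * g) * φ * cos ((φ + γ) / 2))
    (hF : F = fun φ =>
      -m * g - 2 * σ * sin (φ + γ)
      - 4 * a * √(σ * ρ * g) * cos ((φ + γ) / 2) * sin φ
      - (1 / 2) * ρ * g * a ^ 2 * sin (2 * φ)
      + ρ * g * a ^ 2 * φ)
    (hh : h = fun φ =>
      a * cos φ + 2 * √(σ / (ρ * g)) * cos ((φ + γ) / 2)) :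
    ∀ φ : ℝ, HasDerivAt E (-F φ * deriv h φ) φ := by
  have hℓ : ρ * g * √(σ / (ρ * g)) ^ 2 = σ := by
    rw [sq_sqrt (div_nonneg hσ hρg.le), mul_div_cancel₀ _ hρg.ne']
  have hsqrt : √(σ * ρ * g) = ρ * g * √(σ / (ρ * g)) := by
    rw [sqrt_eq_iff_mul_self_eq (by rw [mul_assoc]; positivity) (by positivity)]
    linear_combination -(ρ * g) * hℓ
  have hE' : E = totalEnergy σ ρ g a m √(σ / (ρ * g)) γ := by
    ext φ
    rw [hE, totalEnergy_eq hℓ, hsqrt]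
  have hF' : F = totalForce σ ρ g a m √(σ / (ρ * g)) γ := by
    ext φ
    rw [hF, totalForce_eq, hsqrt]
  have hh' : h = centerHeight a √(σ / (ρ * g)) γ := hh
  rw [hE', hF', hh']
  exact hasDerivAt_totalEnergy hℓ a m γ

/-- The negative derivative of the total energy with respect to the height of the center
equals the total force: `E′(φ) = −F(φ)·h′(φ)` for every `φ`. -/
theorem energy_force_relation (σ ρ g a m γ : ℝ)
    (hσ : 0 < σ) (hρ : 0 < ρ) (hg : 0 < g) (ha : 0 < a) (hm : 0 < m)
    (hγ : γ ∈ Set.Icc (0 : ℝ) Real.pi)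
    (E F h : ℝ → ℝ)
    (hE : E = fun φ =>
      m * g * (a * Real.cos φ + 2 * Real.sqrt (σ / (ρ * g)) * Real.cos ((φ + γ) / 2))
      - 2 * σ * a * φ * Real.cos γ
      + (8 / 3) * σ * Real.sqrt (σ / (ρ * g)) * (1 - Real.sin ((φ + γ) / 2) ^ 3)
      + 2 * σ * a * Real.sin φ * Real.cos (φ + γ)
      + (1 / 12) * ρ * g * a ^ 3 * Real.sin (3 * φ)
      - ρ * g * a ^ 3 * φ * Real.cos φ
      + (3 / 4) * ρ * g * a ^ 3 * Real.sin φ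
      + a ^ 2 * Real.sqrt (σ * ρ * g) * Real.cos ((φ + γ) / 2) * Real.sin (2 * φ)
      - 2 * a ^ 2 * Real.sqrt (σ * ρ * g) * φ * Real.cos ((φ + γ) / 2))
    (hF : F = fun φ =>
      -m * g - 2 * σ * Real.sin (φ + γ)
      - 4 * a * Real.sqrt (σ * ρ * g) * Real.cos ((φ + γ) / 2) * Real.sin φ
      - (1 / 2) * ρ * g * a ^ 2 * Real.sin (2 * φ)
      + ρ * g * a ^ 2 * φ)
    (hh : h = fun φ =>
      a * Real.cos φ + 2 * Real.sqrt (σ / (ρ * g)) * Real.cos ((φ + γ) / 2)) :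
    ∀ φ : ℝ, deriv E φ = -F φ * deriv h φ := fun φ ↦
  (energy_force_relation_general σ ρ g a m γ hσ.le (mul_pos hρ hg) E F h hE hF hh φ).deriv
end

section
/- Let γ ∈ [0, π/2) and φ ∈ (0, π/2 − γ]. Set w = φ − (1/2)·sin(2φ), p = −4·cos((φ+γ)/2)·sin φ, q = −2·sin(φ+γ), and C = (−p + √(p² − 4·w·q))/(2·w). Then the intersection function is strictly positive at (φ, C): I(φ, C) = C·sin φ − √2 − ln(tan(π/8)) + 2·sin((φ+γ)/2) + ln|tan((φ+γ−π)/4)| > 0. (Consequently, for γ ≤ π/2 every equilibrium wetting angle lies in the non-intersection region.) -/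
/-!
Since `q ≤ 0`, the larger root satisfies `C ≥ -p / w`. For `φ ≤ π / 2` the inequality
`φ cos φ ≤ sin φ` gives `w ≤ φ sin² φ`, so `C sin φ ≥ 4 cos ((φ + γ) / 2) / φ`. As
`cos ((φ + γ) / 2) ≥ √2 / 2` and `φ ≤ π / 2 < 2`, this exceeds `√2`. The remaining terms of
`I(φ, C)` have nonnegative sum because `φ + γ ≤ π / 2` forces
`|tan ((φ + γ - π) / 4)| ≥ tan (π / 8)`.
-/

section

open Real Set

/-- The area of the segment of the unit disc cut off by a chord of half-angle `φ`; it is the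
leading coefficient `w` of the equilibrium quadratic. -/
noncomputable def circularSegmentArea (φ : ℝ) : ℝ :=
  φ - (1 / 2) * sin (2 * φ)

/-- The root of `a * x ^ 2 + b * x + c` with the plus sign in the quadratic formula: the larger root
when `0 < a` and the discriminant is nonnegative, and the junk value `0` when `a = 0`. -/
noncomputable def quadraticUpperRoot (a b c : ℝ) : ℝ :=
  (-b + √(b ^ 2 - 4 * a * c)) / (2 * a)

/-- The Bond-number parameter `C` for which `φ` is an equilibrium wetting angle at contact angle
`γ`, obtained from the equilibrium condition with `A = 0`. -/
noncomputable def equilibriumBondParameter (γ φ : ℝ) : ℝ :=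
  quadraticUpperRoot (circularSegmentArea φ) (-4 * cos ((φ + γ) / 2) * sin φ) (-2 * sin (φ + γ))

/-- The function `I(φ, C)` at contact angle `γ`, whose sign decides whether the fluid interfaces on
the two sides of the cylinder intersect: they do when it is nonpositive. -/
noncomputable def intersectionFunction (γ φ C : ℝ) : ℝ :=
  C * sin φ - √2 - log (tan (π / 8)) + 2 * sin ((φ + γ) / 2) + log |tan ((φ + γ - π) / 4)|

lemma mul_cos_le_sin {x : ℝ} (hx₀ : 0 ≤ x) (hxπ : x ≤ π) : x * cos x ≤ sin x := by
  rcases lt_or_ge x (π / 2) with hx | hx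
  · have hcos : 0 < cos x := cos_pos_of_mem_Ioo ⟨by linarith, hx⟩
    rw [← le_div_iff₀ hcos, ← tan_eq_sin_div_cos]
    exact le_tan hx₀ hx
  · have hcos : cos x ≤ 0 := cos_nonpos_of_pi_div_two_le_of_le hx (by linarith)
    exact (mul_nonpos_of_nonneg_of_nonpos hx₀ hcos).trans (sin_nonneg_of_nonneg_of_le_pi hx₀ hxπ)

lemma circularSegmentArea_pos {φ : ℝ} (hφ : 0 < φ) : 0 < circularSegmentArea φ := by
  have hsin : sin (2 * φ) < 2 * φ := sin_lt (by positivity)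
  unfold circularSegmentArea
  linarith

lemma circularSegmentArea_le_mul_sin_sq {φ : ℝ} (hφ₀ : 0 ≤ φ) (hφ : φ ≤ π / 2) :
    circularSegmentArea φ ≤ φ * sin φ ^ 2 := by
  have hcos : 0 ≤ cos φ := cos_nonneg_of_neg_pi_div_two_le_of_le (by linarith) hφ
  have hmul : φ * cos φ * cos φ ≤ sin φ * cos φ := by
    gcongr
    exact mul_cos_le_sin hφ₀ (by linarith)
  calc circularSegmentArea φ = φ - sin φ * cos φ := by
        rw [circularSegmentArea, sin_two_mul]; ring
    _ ≤ φ - φ * cos φ * cos φ := by gcongr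
    _ = φ * sin φ ^ 2 := by rw [sin_sq]; ring

lemma neg_div_le_quadraticUpperRoot {a b c : ℝ} (ha : 0 < a) (hc : c ≤ 0) :
    -b / a ≤ quadraticUpperRoot a b c := by
  have hac : a * c ≤ 0 := mul_nonpos_of_nonneg_of_nonpos ha.le hc
  have hsqrt : -b ≤ √(b ^ 2 - 4 * a * c) := le_sqrt_of_sq_le (by linarith [neg_sq b])
  calc -b / a = (-b + -b) / (2 * a) := by field_simp; ring
    _ ≤ quadraticUpperRoot a b c := by unfold quadraticUpperRoot; gcongr

lemma four_mul_cos_div_le_equilibriumBondParameter_mul_sin {γ φ : ℝ}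
    (hφ : φ ∈ Ioc 0 (π / 2)) (hs : φ + γ ∈ Icc 0 π) :
    4 * cos ((φ + γ) / 2) / φ ≤ equilibriumBondParameter γ φ * sin φ := by
  obtain ⟨hφ₀, hφ₁⟩ := hφ
  obtain ⟨hs₀, hs₁⟩ := hs
  have hsin : 0 < sin φ := sin_pos_of_pos_of_lt_pi hφ₀ (by linarith)
  have hcos : 0 ≤ cos ((φ + γ) / 2) :=
    cos_nonneg_of_neg_pi_div_two_le_of_le (by linarith) (by linarith)
  have harea : 0 < circularSegmentArea φ := circularSegmentArea_pos hφ₀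
  have hroot := neg_div_le_quadraticUpperRoot (b := -4 * cos ((φ + γ) / 2) * sin φ) harea
    (show -2 * sin (φ + γ) ≤ 0 by linarith [sin_nonneg_of_nonneg_of_le_pi hs₀ hs₁])
  calc 4 * cos ((φ + γ) / 2) / φ
      = 4 * cos ((φ + γ) / 2) * sin φ ^ 2 / (φ * sin φ ^ 2) := by field_simp
    _ ≤ 4 * cos ((φ + γ) / 2) * sin φ ^ 2 / circularSegmentArea φ := by
        gcongr
        exact circularSegmentArea_le_mul_sin_sq hφ₀.le hφ₁
    _ = -(-4 * cos ((φ + γ) / 2) * sin φ) / circularSegmentArea φ * sin φ := by ring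
    _ ≤ equilibriumBondParameter γ φ * sin φ := by
        unfold equilibriumBondParameter
        gcongr

lemma sqrt_two_lt_equilibriumBondParameter_mul_sin {γ φ : ℝ}
    (hφ : φ ∈ Ioc 0 (π / 2)) (hs : φ + γ ∈ Icc 0 (π / 2)) :
    √2 < equilibriumBondParameter γ φ * sin φ := by
  obtain ⟨hφ₀, hφ₁⟩ := hφ
  obtain ⟨hs₀, hs₁⟩ := hs
  have hcos : √2 / 2 ≤ cos ((φ + γ) / 2) := by
    rw [← cos_pi_div_four]
    exact cos_le_cos_of_nonneg_of_le_pi (by linarith) (by linarith) (by linarith)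
  have hφ₂ : φ < 2 := by linarith [pi_lt_four]
  calc √2 = 2 * √2 / 2 := by ring
    _ < 2 * √2 / φ := by gcongr
    _ = 4 * (√2 / 2) / φ := by ring
    _ ≤ 4 * cos ((φ + γ) / 2) / φ := by gcongr
    _ ≤ equilibriumBondParameter γ φ * sin φ :=
        four_mul_cos_div_le_equilibriumBondParameter_mul_sin ⟨hφ₀, hφ₁⟩ ⟨hs₀, by linarith⟩

lemma antitoneOn_log_abs_tan : AntitoneOn (fun x ↦ log |tan x|) (Ioo (-(π / 2)) 0) := by
  intro x hx y hy hxy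
  have hy_neg : tan y < 0 := tan_neg_of_neg_of_pi_div_two_lt hy.2 hy.1
  have htan : tan x ≤ tan y :=
    strictMonoOn_tan.monotoneOn ⟨hx.1, by linarith [hx.2, pi_pos]⟩
      ⟨hy.1, by linarith [hy.2, pi_pos]⟩ hxy
  exact log_le_log (abs_pos.2 hy_neg.ne) (abs_le_abs_of_nonpos hy_neg.le htan)

lemma log_tan_pi_div_eight_le_log_abs_tan {s : ℝ} (hs : s ∈ Ioc (-π) (π / 2)) :
    log (tan (π / 8)) ≤ log |tan ((s - π) / 4)| := by
  obtain ⟨hs₀, hs₁⟩ := hs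
  calc log (tan (π / 8)) = log |tan (-(π / 8))| := by rw [tan_neg, abs_neg, log_abs]
    _ ≤ log |tan ((s - π) / 4)| :=
        antitoneOn_log_abs_tan ⟨by linarith, by linarith⟩
          ⟨by linarith [pi_pos], by linarith [pi_pos]⟩ (by linarith)

theorem equilibrium_not_in_intersection_region_acute_general {γ φ : ℝ}
    (hφ : φ ∈ Ioc 0 (π / 2)) (hs : φ + γ ∈ Icc 0 (π / 2)) :
    0 < intersectionFunction γ φ (equilibriumBondParameter γ φ) := by
  have hC := sqrt_two_lt_equilibriumBondParameter_mul_sin hφ hs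
  have hlog := log_tan_pi_div_eight_le_log_abs_tan ⟨by linarith [hs.1, pi_pos], hs.2⟩
  have hsin : 0 ≤ sin ((φ + γ) / 2) :=
    sin_nonneg_of_nonneg_of_le_pi (by linarith [hs.1]) (by linarith [hs.2, pi_pos])
  unfold intersectionFunction
  linarith

end

/-- For `γ ∈ [0, π/2)` and `φ ∈ (0, π/2 − γ]`, with `C` the positive root of the equilibrium
quadratic `w·C² + p·C + q = 0` (with `A = 0`), the intersection function is strictly positive:
`I(φ, C) = C·sin φ − √2 − ln(tan(π/8)) + 2·sin((φ+γ)/2) + ln|tan((φ+γ−π)/4)| > 0`. -/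
theorem equilibrium_not_in_intersection_region_acute (γ φ : ℝ)
    (hγ : γ ∈ Set.Ico (0 : ℝ) (Real.pi / 2))
    (hφ : φ ∈ Set.Ioc (0 : ℝ) (Real.pi / 2 - γ))
    (w p q C : ℝ)
    (hw : w = φ - (1 / 2) * Real.sin (2 * φ))
    (hp : p = -4 * Real.cos ((φ + γ) / 2) * Real.sin φ)
    (hq : q = -2 * Real.sin (φ + γ))
    (hC : C = (-p + Real.sqrt (p ^ 2 - 4 * w * q)) / (2 * w)) :
    0 < C * Real.sin φ - Real.sqrt 2 - Real.log (Real.tan (Real.pi / 8))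
      + 2 * Real.sin ((φ + γ) / 2) + Real.log |Real.tan ((φ + γ - Real.pi) / 4)| := by
  subst hw hp hq hC
  exact equilibrium_not_in_intersection_region_acute_general
    ⟨hφ.1, by linarith [hφ.2, hγ.1]⟩ ⟨by linarith [hφ.1, hγ.1], by linarith [hφ.2]⟩
end

section
/- Let γ ∈ (π/2, π] and φ ∈ (3π/2 − γ, π). Set w̄ = 1 − cos(2φ), p̄ = 2·sin((φ+γ)/2)·sin φ − 4·cos((φ+γ)/2)·cos φ, q̄ = −2·cos(φ+γ), and C = (−p̄ + √(p̄² − 4·w̄·q̄))/(2·w̄). Then the intersection function is strictly positive at (φ, C): I(φ, C) = C·sin φ − √2 − ln(tan(π/8)) + 2·sin((φ+γ)/2) + ln|tan((φ+γ−π)/4)| > 0. (Consequently, for γ > π/2 the stable equilibrium always lies in the non-intersection region.) -/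
/-!
Write `s = sin ((φ + γ) / 2)`. The number `x₀ = cos (φ + γ) / (s * sin φ)` is a root of the
critical-point quadratic when `γ = π`. For smaller `γ` the quadratic is nonpositive at `x₀`, so its
larger root `C` satisfies `C * sin φ ≥ cos (φ + γ) / s = 1 / s - 2 * s`. This absorbs the summand
`2 * s` of the intersection function, and `1 / s > √2` because `2 * s ^ 2 = 1 - cos (φ + γ) < 1`.
The logarithms are compared by monotonicity of `tan`, since `π / 8 < (φ + γ - π) / 4 < π / 4`.
-/

section

open Real

theorem le_quadratic_root_of_quadratic_nonpos {a b c x : ℝ} (ha : 0 < a)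
    (hx : a * (x * x) + b * x + c ≤ 0) : x ≤ (-b + √(discrim a b c)) / (2 * a) := by
  have hsq : (2 * a * x + b) ^ 2 ≤ discrim a b c := by
    have hmul := mul_nonpos_of_nonneg_of_nonpos ha.le hx
    unfold discrim
    linarith
  rw [le_div_iff₀ (by positivity)]
  linarith [le_sqrt_of_sq_le hsq]

theorem strictMonoOn_log_tan : StrictMonoOn (fun x ↦ log (tan x)) (Set.Ioo 0 (π / 2)) :=
  fun x hx _ hy hxy ↦ log_lt_log (tan_pos_of_pos_of_lt_pi_div_two hx.1 hx.2)
    (tan_lt_tan_of_lt_of_lt_pi_div_two (by linarith [hx.1, pi_pos]) hy.2 hxy)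

theorem sqrt_two_lt_cos_two_mul_div_sin_add {θ : ℝ} (hsin : 0 < sin θ) (hcos : 0 < cos (2 * θ)) :
    √2 < cos (2 * θ) / sin θ + 2 * sin θ := by
  have hdouble : cos (2 * θ) = 1 - 2 * sin θ ^ 2 := by linarith [sin_sq_eq_half_sub θ]
  calc √2 < 1 / sin θ := by
        rw [sqrt_lt' (by positivity), div_pow, lt_div_iff₀ (by positivity)]
        linarith
    _ = cos (2 * θ) / sin θ + 2 * sin θ := by rw [hdouble]; field_simp; ring

/-- The derivative `F′(φ)` of the dimensionless total force on the cylinder, as a quadratic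
`w̄ * C² + p̄ * C + q̄` in the Bond-number parameter `C`; it vanishes when `φ` is a critical point
of `F`. -/
noncomputable def criticalQuadratic (γ φ C : ℝ) : ℝ :=
  (1 - cos (2 * φ)) * (C * C)
    + (2 * sin ((φ + γ) / 2) * sin φ - 4 * cos ((φ + γ) / 2) * cos φ) * C + -2 * cos (φ + γ)

theorem criticalQuadratic_cos_div_sin_mul_sin {γ φ : ℝ} (hφ : sin φ ≠ 0)
    (hs : sin ((φ + γ) / 2) ≠ 0) :
    criticalQuadratic γ φ (cos (φ + γ) / (sin ((φ + γ) / 2) * sin φ))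
      = -(2 * cos (φ + γ) * sin γ / (sin ((φ + γ) / 2) ^ 2 * sin φ)) := by
  have hsinγ : sin γ = 2 * sin ((φ + γ) / 2) * cos ((φ + γ) / 2) * cos φ - cos (φ + γ) * sin φ := by
    rw [← sin_two_mul, mul_div_cancel₀ _ two_ne_zero, ← sin_sub, add_sub_cancel_left]
  have hw : 1 - cos (2 * φ) = 2 * sin φ ^ 2 := by linarith [sin_sq_eq_half_sub φ]
  rw [criticalQuadratic, hw, hsinγ]
  field_simp
  ring

theorem criticalQuadratic_cos_div_sin_mul_sin_nonpos {γ φ : ℝ} (hφ : 0 < sin φ)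
    (hs : 0 < sin ((φ + γ) / 2)) (hγ : 0 ≤ sin γ) (hcos : 0 ≤ cos (φ + γ)) :
    criticalQuadratic γ φ (cos (φ + γ) / (sin ((φ + γ) / 2) * sin φ)) ≤ 0 := by
  rw [criticalQuadratic_cos_div_sin_mul_sin hφ.ne' hs.ne', neg_nonpos]
  positivity

end

/-- For `γ ∈ (π/2, π]` and `φ ∈ (3π/2 − γ, π)`, with `C` the positive root of the
critical-point quadratic `w̄·C² + p̄·C + q̄ = 0`, the intersection function is strictly
positive: `I(φ, C) = C·sin φ − √2 − ln(tan(π/8)) + 2·sin((φ+γ)/2) + ln|tan((φ+γ−π)/4)| > 0`. -/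
theorem stable_equilibrium_not_in_intersection_region_obtuse (γ φ : ℝ)
    (hγ : γ ∈ Set.Ioc (Real.pi / 2) Real.pi)
    (hφ : φ ∈ Set.Ioo (3 * Real.pi / 2 - γ) Real.pi)
    (w p q C : ℝ)
    (hw : w = 1 - Real.cos (2 * φ))
    (hp : p = 2 * Real.sin ((φ + γ) / 2) * Real.sin φ
      - 4 * Real.cos ((φ + γ) / 2) * Real.cos φ)
    (hq : q = -2 * Real.cos (φ + γ))
    (hC : C = (-p + Real.sqrt (p ^ 2 - 4 * w * q)) / (2 * w)) :
    0 < C * Real.sin φ - Real.sqrt 2 - Real.log (Real.tan (Real.pi / 8))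
      + 2 * Real.sin ((φ + γ) / 2) + Real.log |Real.tan ((φ + γ - Real.pi) / 4)| := by
  obtain ⟨⟨-, hγπ⟩, hφγ, hφπ⟩ := And.intro hγ hφ
  have hsinφ : 0 < Real.sin φ := Real.sin_pos_of_pos_of_lt_pi (by linarith) hφπ
  have hsinγ : 0 ≤ Real.sin γ := Real.sin_nonneg_of_nonneg_of_le_pi (by linarith) hγπ
  have hs : 0 < Real.sin ((φ + γ) / 2) :=
    Real.sin_pos_of_pos_of_lt_pi (by linarith) (by linarith)
  have hcos : 0 < Real.cos (φ + γ) := by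
    rw [← Real.cos_sub_two_pi]
    exact Real.cos_pos_of_mem_Ioo ⟨by linarith, by linarith⟩
  have hw_pos : 0 < w := by linarith [Real.sin_sq_eq_half_sub φ, pow_pos hsinφ 2]
  have hroot : Real.cos (φ + γ) / (Real.sin ((φ + γ) / 2) * Real.sin φ) ≤ C := by
    subst hp hq hC hw
    exact le_quadratic_root_of_quadratic_nonpos hw_pos
      (criticalQuadratic_cos_div_sin_mul_sin_nonpos hsinφ hs hsinγ hcos.le)
  have hCsin : Real.cos (φ + γ) / Real.sin ((φ + γ) / 2) ≤ C * Real.sin φ := by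
    rwa [← div_div, div_le_iff₀ hsinφ] at hroot
  have hsqrt : √2 < Real.cos (φ + γ) / Real.sin ((φ + γ) / 2) + 2 * Real.sin ((φ + γ) / 2) := by
    have h2 : 2 * ((φ + γ) / 2) = φ + γ := mul_div_cancel₀ _ two_ne_zero
    simpa only [h2] using sqrt_two_lt_cos_two_mul_div_sin_add hs (h2.symm ▸ hcos)
  have hlog : Real.log (Real.tan (Real.pi / 8)) < Real.log (Real.tan ((φ + γ - Real.pi) / 4)) :=
    strictMonoOn_log_tan ⟨by linarith, by linarith⟩ ⟨by linarith, by linarith⟩ (by linarith)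
  rw [Real.log_abs]
  linarith
end
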